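/- arXiv:2009.12755 — 3 statements merged into one kernel-verified Lean document; each statement's English description precedes it below -/
import Mathlib

section
/- (Huber-loss tail estimate.) Suppose E|Y|^{1+ε} < ∞ for some ε > 0, ‖f⋆‖_∞ ≤ M, σ > max(2M,1), and f : X → ℝ is measurable with ‖f‖_∞ ≤ M. Then | ∫_{{(x,y) : |y| ≥ σ/2}} [ℓ_σ(y − f(x)) − ℓ_σ(y − f⋆(x))] dρ(x,y) | ≤ 2^{2+ε} ‖f − f⋆‖_∞ E|Y|^{1+ε} / σ^ε. -/
open MeasureTheory

/-- The Huber loss with scale `σ`. -/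
noncomputable def huberLoss (σ t : ℝ) : ℝ :=
  if |t| ≤ σ then t ^ 2 else 2 * σ * |t| - σ ^ 2

/-!
The Huber loss is `2σ`-Lipschitz, so the integrand is at most `2σ‖f − f⋆‖_∞`, while Markov's
inequality for `|Y|^{1+ε}` bounds the measure of the tail `{|Y| ≥ σ/2}` by
`(2/σ)^{1+ε} E|Y|^{1+ε}`.
-/

theorem huberLoss_eq_two_mul_min_mul_abs_sub_sq (σ t : ℝ) :
    huberLoss σ t = 2 * min |t| σ * |t| - min |t| σ ^ 2 := by
  unfold huberLoss
  split_ifs with ht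
  · rw [min_eq_left ht, ← sq_abs]
    ring
  · rw [min_eq_right (not_le.1 ht).le]

theorem two_mul_mul_abs_sub_sq_le_huberLoss {s σ : ℝ} (hs : s ≤ σ) (t : ℝ) :
    2 * s * |t| - s ^ 2 ≤ huberLoss σ t := by
  unfold huberLoss
  split_ifs with ht
  · rw [← sq_abs t]
    linarith [sq_nonneg (|t| - s)]
  · have hfactor : 0 ≤ (σ - s) * (2 * |t| - σ - s) :=
      mul_nonneg (by linarith) (by linarith)
    linarith

-- `huberLoss σ t` is the maximum over `s ≤ σ` of `2 * s * |t| - s ^ 2`, attained at `min |t| σ`;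
-- the maximizer for `a` is a competitor for `b`.
theorem huberLoss_sub_le {σ : ℝ} (hσ : 0 ≤ σ) (a b : ℝ) :
    huberLoss σ a - huberLoss σ b ≤ 2 * σ * |a - b| := by
  set s := min |a| σ
  have hs_nonneg : 0 ≤ s := le_min (abs_nonneg a) hσ
  have hs_le : s ≤ σ := min_le_right _ _
  calc huberLoss σ a - huberLoss σ b
      ≤ (2 * s * |a| - s ^ 2) - (2 * s * |b| - s ^ 2) :=
        sub_le_sub (huberLoss_eq_two_mul_min_mul_abs_sub_sq σ a).le
          (two_mul_mul_abs_sub_sq_le_huberLoss hs_le b)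
    _ = 2 * s * (|a| - |b|) := by ring
    _ ≤ 2 * s * |a - b| :=
        mul_le_mul_of_nonneg_left (abs_sub_abs_le_abs_sub a b) (mul_nonneg zero_le_two hs_nonneg)
    _ ≤ 2 * σ * |a - b| := by gcongr

theorem abs_huberLoss_sub_le {σ : ℝ} (hσ : 0 ≤ σ) (a b : ℝ) :
    |huberLoss σ a - huberLoss σ b| ≤ 2 * σ * |a - b| :=
  abs_sub_le_iff.2 ⟨huberLoss_sub_le hσ a b, abs_sub_comm a b ▸ huberLoss_sub_le hσ b a⟩

theorem abs_huberLoss_sub_left_sub_le {σ : ℝ} (hσ : 0 ≤ σ) (y u v : ℝ) :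
    |huberLoss σ (y - u) - huberLoss σ (y - v)| ≤ 2 * σ * |u - v| := by
  simpa only [sub_sub_sub_cancel_left, abs_sub_comm v u] using
    abs_huberLoss_sub_le hσ (y - u) (y - v)

theorem continuous_huberLoss {σ : ℝ} (hσ : 0 ≤ σ) : Continuous (huberLoss σ) :=
  (LipschitzWith.of_dist_le' (abs_huberLoss_sub_le hσ)).continuous

section Markov

variable {Ω : Type*} {Y : Ω → ℝ} {a p : ℝ}

theorem setOf_le_abs_eq_setOf_rpow_le_abs_rpow (ha : 0 ≤ a) (hp : 0 < p) :
    {ω | a ≤ |Y ω|} = {ω | a ^ p ≤ |Y ω| ^ p} := by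
  ext ω
  exact (Real.rpow_le_rpow_iff ha (abs_nonneg _) hp).symm

variable [MeasurableSpace Ω] {μ : Measure Ω}

theorem measure_le_abs_lt_top_of_integrable_rpow (ha : 0 < a) (hp : 0 < p)
    (hY : Integrable (fun ω => |Y ω| ^ p) μ) : μ {ω | a ≤ |Y ω|} < ⊤ := by
  rw [setOf_le_abs_eq_setOf_rpow_le_abs_rpow ha.le hp]
  exact hY.measure_ge_lt_top (Real.rpow_pos_of_pos ha p)

theorem measureReal_le_abs_le_integral_rpow_div (ha : 0 < a) (hp : 0 < p)
    (hY : Integrable (fun ω => |Y ω| ^ p) μ) :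
    μ.real {ω | a ≤ |Y ω|} ≤ (∫ ω, |Y ω| ^ p ∂μ) / a ^ p := by
  rw [setOf_le_abs_eq_setOf_rpow_le_abs_rpow ha.le hp,
    le_div_iff₀' (Real.rpow_pos_of_pos ha p)]
  exact mul_meas_ge_le_integral_of_nonneg (.of_forall fun ω => by positivity) hY _

end Markov

theorem two_mul_div_half_rpow_one_add {σ : ℝ} (hσ : 0 < σ) (ε : ℝ) :
    2 * σ / (σ / 2) ^ (1 + ε) = 2 ^ (2 + ε) / σ ^ ε := by
  rw [Real.div_rpow hσ.le zero_le_two, Real.rpow_add hσ, Real.rpow_add two_pos,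
    Real.rpow_add two_pos, Real.rpow_one, Real.rpow_one, Real.rpow_two]
  field_simp

theorem huber_loss_tail_estimate_general
    {Ω : Type*} [MeasurableSpace Ω] {μ : Measure Ω} {ε σ D : ℝ} (hε : -1 < ε) (hσ : 0 < σ)
    {Y f g : Ω → ℝ} (hY : AEStronglyMeasurable Y μ) (hf : AEStronglyMeasurable f μ)
    (hg : AEStronglyMeasurable g μ) (hmom : Integrable (fun ω => |Y ω| ^ (1 + ε)) μ)
    (hD : ∀ᵐ ω ∂μ, |f ω - g ω| ≤ D) :
    IntegrableOn (fun ω => huberLoss σ (Y ω - f ω) - huberLoss σ (Y ω - g ω))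
        {ω | σ / 2 ≤ |Y ω|} μ ∧
      |∫ ω in {ω | σ / 2 ≤ |Y ω|}, (huberLoss σ (Y ω - f ω) - huberLoss σ (Y ω - g ω)) ∂μ|
        ≤ 2 ^ (2 + ε) * D * (∫ ω, |Y ω| ^ (1 + ε) ∂μ) / σ ^ ε := by
  rcases eq_zero_or_neZero μ with rfl | _
  · simp [IntegrableOn]
  obtain ⟨ω₀, hω₀⟩ := hD.exists
  have hD_nonneg : 0 ≤ D := (abs_nonneg _).trans hω₀
  have htail : μ {ω | σ / 2 ≤ |Y ω|} < ⊤ :=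
    measure_le_abs_lt_top_of_integrable_rpow (half_pos hσ) (by linarith) hmom
  have hmeas : AEStronglyMeasurable
      (fun ω => huberLoss σ (Y ω - f ω) - huberLoss σ (Y ω - g ω)) μ :=
    ((continuous_huberLoss hσ.le).comp_aestronglyMeasurable (hY.sub hf)).sub
      ((continuous_huberLoss hσ.le).comp_aestronglyMeasurable (hY.sub hg))
  have hbound : ∀ᵐ ω ∂μ.restrict {ω | σ / 2 ≤ |Y ω|},
      ‖huberLoss σ (Y ω - f ω) - huberLoss σ (Y ω - g ω)‖ ≤ 2 * σ * D := by
    filter_upwards [ae_restrict_of_ae hD] with ω hω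
    exact (abs_huberLoss_sub_left_sub_le hσ.le _ _ _).trans (by gcongr)
  refine ⟨Measure.integrableOn_of_bounded htail.ne hmeas hbound, ?_⟩
  calc |∫ ω in {ω | σ / 2 ≤ |Y ω|}, (huberLoss σ (Y ω - f ω) - huberLoss σ (Y ω - g ω)) ∂μ|
      ≤ 2 * σ * D * μ.real {ω | σ / 2 ≤ |Y ω|} :=
        norm_setIntegral_le_of_norm_le_const_ae htail hbound
    _ ≤ 2 * σ * D * ((∫ ω, |Y ω| ^ (1 + ε) ∂μ) / (σ / 2) ^ (1 + ε)) := by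
        gcongr
        exact measureReal_le_abs_le_integral_rpow_div (half_pos hσ) (by linarith) hmom
    _ = 2 * σ / (σ / 2) ^ (1 + ε) * D * ∫ ω, |Y ω| ^ (1 + ε) ∂μ := by ring
    _ = 2 ^ (2 + ε) * D * (∫ ω, |Y ω| ^ (1 + ε) ∂μ) / σ ^ ε := by
        rw [two_mul_div_half_rpow_one_add hσ]
        ring

/-- Huber-loss tail estimate:
`|∫_{|y| ≥ σ/2} [ℓ_σ(y−f(x)) − ℓ_σ(y−f⋆(x))] dρ| ≤ 2^{2+ε} ‖f−f⋆‖_∞ E|Y|^{1+ε} / σ^ε`. -/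
theorem huber_loss_tail_estimate
    {X : Type*} [MeasurableSpace X] [MetricSpace X] [CompactSpace X] [BorelSpace X]
    (ρ : Measure (X × ℝ)) [IsProbabilityMeasure ρ]
    (ε M σ : ℝ) (hε : 0 < ε) (hσ : max (2 * M) 1 < σ)
    (hmom : Integrable (fun p : X × ℝ => |p.2| ^ (1 + ε)) ρ)
    (fstar : X → ℝ) (hfstar_meas : Measurable fstar)
    (hfstar_bdd : ∀ x, |fstar x| ≤ M)
    (hfstar_mean : ∀ᵐ x ∂ρ.fst, fstar x = ∫ y, y ∂(ρ.condKernel x))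
    (f : X → ℝ) (hf_meas : Measurable f) (hf_bdd : ∀ x, |f x| ≤ M) :
    |∫ p in {p : X × ℝ | σ / 2 ≤ |p.2|},
        (huberLoss σ (p.2 - f p.1) - huberLoss σ (p.2 - fstar p.1)) ∂ρ|
      ≤ (2 : ℝ) ^ (2 + ε) * (⨆ x, |f x - fstar x|) * (∫ p, |p.2| ^ (1 + ε) ∂ρ) / σ ^ ε := by
  have hbdd : BddAbove (Set.range fun x => |f x - fstar x|) :=
    ⟨M + M, Set.forall_mem_range.2 fun x =>
      (abs_sub _ _).trans (add_le_add (hf_bdd x) (hfstar_bdd x))⟩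
  exact (huber_loss_tail_estimate_general (by linarith) (by linarith [le_max_right (2 * M) 1])
    measurable_snd.aestronglyMeasurable (hf_meas.comp measurable_fst).aestronglyMeasurable
    (hfstar_meas.comp measurable_fst).aestronglyMeasurable hmom
    (.of_forall fun p => le_ciSup hbdd p.1)).2
end

section
/- (Second moment of squared-loss difference, weak moment case.) Suppose E|Y|^{1+ε} < ∞ for some 0 < ε ≤ 1, ‖f⋆‖_∞ ≤ M, σ > max(2M,1), and f : X → ℝ is measurable with ‖f‖_∞ ≤ M. Then ∫_{{(x,y) : |y| < σ/2}} (f(x) − f⋆(x))² (2y − f(x) − f⋆(x))² dρ(x,y) ≤ 48 M² (E|Y|^{1+ε} + M^{1+ε}) σ^{1−ε}. -/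
open MeasureTheory

/-!
Bounded predictors make the squared-loss difference at most a constant times `M² (y² + M²)`.
When `|y|` and `M` are at most `σ`, each of the squares `y²` and `M²` is interpolated as
`t² = t^{1+ε} t^{1-ε} ≤ t^{1+ε} σ^{1-ε}`, so that only a moment of order `1 + ε` is paid.
-/

theorem rpow_le_rpow_mul_rpow_sub {t s p q : ℝ} (ht : 0 ≤ t) (hts : t ≤ s) (hp : 0 ≤ p)
    (hpq : p ≤ q) : t ^ q ≤ t ^ p * s ^ (q - p) := by
  have hqp : 0 ≤ q - p := sub_nonneg.mpr hpq
  calc t ^ q = t ^ p * t ^ (q - p) := by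
        rw [← Real.rpow_add_of_nonneg ht hp hqp, add_sub_cancel]
    _ ≤ t ^ p * s ^ (q - p) := by gcongr

theorem sq_le_abs_rpow_mul_rpow {t s ε : ℝ} (hts : |t| ≤ s) (hε : -1 ≤ ε) (hε1 : ε ≤ 1) :
    t ^ 2 ≤ |t| ^ (1 + ε) * s ^ (1 - ε) := by
  have h := rpow_le_rpow_mul_rpow_sub (abs_nonneg t) hts
    (by linarith : 0 ≤ 1 + ε) (by linarith : 1 + ε ≤ 2)
  rwa [Real.rpow_two, sq_abs, show 2 - (1 + ε) = 1 - ε by ring] at h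

theorem sq_sub_mul_sq_le {a b y M : ℝ} (ha : |a| ≤ M) (hb : |b| ≤ M) :
    (a - b) ^ 2 * (2 * y - a - b) ^ 2 ≤ 32 * M ^ 2 * (y ^ 2 + M ^ 2) := by
  have ha_sq : a ^ 2 ≤ M ^ 2 := sq_le_sq.mpr (ha.trans (le_abs_self M))
  have hb_sq : b ^ 2 ≤ M ^ 2 := sq_le_sq.mpr (hb.trans (le_abs_self M))
  have hdiff : (a - b) ^ 2 ≤ 4 * M ^ 2 := by linarith [sq_nonneg (a + b)]
  have hsum : (a + b) ^ 2 ≤ 4 * M ^ 2 := by linarith [sq_nonneg (a - b)]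
  have hres : (2 * y - a - b) ^ 2 ≤ 8 * (y ^ 2 + M ^ 2) := by
    linarith [sq_nonneg (2 * y + (a + b))]
  calc (a - b) ^ 2 * (2 * y - a - b) ^ 2
      ≤ 4 * M ^ 2 * (8 * (y ^ 2 + M ^ 2)) := by gcongr
    _ = 32 * M ^ 2 * (y ^ 2 + M ^ 2) := by ring

theorem sq_sub_mul_sq_le_rpow {a b y M σ ε : ℝ} (ha : |a| ≤ M) (hb : |b| ≤ M) (hy : |y| ≤ σ)
    (hMσ : M ≤ σ) (hε : -1 ≤ ε) (hε1 : ε ≤ 1) :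
    (a - b) ^ 2 * (2 * y - a - b) ^ 2
      ≤ 32 * M ^ 2 * (|y| ^ (1 + ε) + M ^ (1 + ε)) * σ ^ (1 - ε) := by
  have hM : |M| = M := abs_of_nonneg ((abs_nonneg a).trans ha)
  have hy_sq : y ^ 2 ≤ |y| ^ (1 + ε) * σ ^ (1 - ε) := sq_le_abs_rpow_mul_rpow hy hε hε1
  have hM_sq : M ^ 2 ≤ M ^ (1 + ε) * σ ^ (1 - ε) := by
    simpa only [hM] using sq_le_abs_rpow_mul_rpow (hM.trans_le hMσ) hε hε1
  calc (a - b) ^ 2 * (2 * y - a - b) ^ 2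
      ≤ 32 * M ^ 2 * (y ^ 2 + M ^ 2) := sq_sub_mul_sq_le ha hb
    _ ≤ 32 * M ^ 2 * (|y| ^ (1 + ε) * σ ^ (1 - ε) + M ^ (1 + ε) * σ ^ (1 - ε)) := by gcongr
    _ = 32 * M ^ 2 * (|y| ^ (1 + ε) + M ^ (1 + ε)) * σ ^ (1 - ε) := by ring

section Integral

variable {Ω : Type*} [MeasurableSpace Ω] {μ : Measure Ω} {U V Y : Ω → ℝ} {ε M σ : ℝ}

theorem integral_sq_sub_mul_sq_le [IsFiniteMeasure μ]
    (hU : AEMeasurable U μ) (hV : AEMeasurable V μ) (hY : AEMeasurable Y μ)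
    (hUM : ∀ᵐ ω ∂μ, |U ω| ≤ M) (hVM : ∀ᵐ ω ∂μ, |V ω| ≤ M) (hYσ : ∀ᵐ ω ∂μ, |Y ω| ≤ σ)
    (hMσ : M ≤ σ) (hε : -1 ≤ ε) (hε1 : ε ≤ 1) :
    ∫ ω, (U ω - V ω) ^ 2 * (2 * Y ω - U ω - V ω) ^ 2 ∂μ
      ≤ 32 * M ^ 2 * ((∫ ω, |Y ω| ^ (1 + ε) ∂μ) + μ.real Set.univ * M ^ (1 + ε))
        * σ ^ (1 - ε) := by
  have hbound : ∀ᵐ ω ∂μ, (U ω - V ω) ^ 2 * (2 * Y ω - U ω - V ω) ^ 2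
      ≤ 32 * M ^ 2 * (|Y ω| ^ (1 + ε) + M ^ (1 + ε)) * σ ^ (1 - ε) := by
    filter_upwards [hUM, hVM, hYσ] with ω hUω hVω hYω
    exact sq_sub_mul_sq_le_rpow hUω hVω hYω hMσ hε hε1
  have hmom : Integrable (fun ω => |Y ω| ^ (1 + ε)) μ := by
    refine .of_bound (hY.abs.pow_const _).aestronglyMeasurable (σ ^ (1 + ε)) ?_
    filter_upwards [hYσ] with ω hYω
    rw [Real.norm_of_nonneg (by positivity)]
    exact Real.rpow_le_rpow (abs_nonneg _) hYω (by linarith)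
  have hdom : Integrable
      (fun ω => 32 * M ^ 2 * (|Y ω| ^ (1 + ε) + M ^ (1 + ε)) * σ ^ (1 - ε)) μ :=
    ((hmom.add (integrable_const _)).const_mul _).mul_const _
  have hint : Integrable (fun ω => (U ω - V ω) ^ 2 * (2 * Y ω - U ω - V ω) ^ 2) μ := by
    refine hdom.mono' (by fun_prop) ?_
    filter_upwards [hbound] with ω hω
    rwa [Real.norm_of_nonneg (by positivity)]
  calc ∫ ω, (U ω - V ω) ^ 2 * (2 * Y ω - U ω - V ω) ^ 2 ∂μ
      ≤ ∫ ω, 32 * M ^ 2 * (|Y ω| ^ (1 + ε) + M ^ (1 + ε)) * σ ^ (1 - ε) ∂μ :=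
        integral_mono_ae hint hdom hbound
    _ = _ := by
        rw [integral_mul_const, integral_const_mul, integral_add hmom (integrable_const _),
          integral_const, smul_eq_mul]

theorem second_moment_square_loss_diff_weak_general [IsProbabilityMeasure μ] {τ : ℝ}
    (hU : AEMeasurable U μ) (hV : AEMeasurable V μ) (hY : AEMeasurable Y μ)
    (hUM : ∀ᵐ ω ∂μ, |U ω| ≤ M) (hVM : ∀ᵐ ω ∂μ, |V ω| ≤ M)
    (hMσ : M ≤ σ) (hτσ : τ ≤ σ) (hε : -1 ≤ ε) (hε1 : ε ≤ 1)
    (hmom : Integrable (fun ω => |Y ω| ^ (1 + ε)) μ) :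
    ∫ ω in {ω | |Y ω| < τ}, (U ω - V ω) ^ 2 * (2 * Y ω - U ω - V ω) ^ 2 ∂μ
      ≤ 32 * M ^ 2 * ((∫ ω, |Y ω| ^ (1 + ε) ∂μ) + M ^ (1 + ε)) * σ ^ (1 - ε) := by
  obtain ⟨ω₀, hω₀⟩ := hUM.exists
  have hM : 0 ≤ M := (abs_nonneg _).trans hω₀
  have hσ : 0 ≤ σ := hM.trans hMσ
  have hYσ : ∀ᵐ ω ∂μ.restrict {ω | |Y ω| < τ}, |Y ω| ≤ σ := by
    filter_upwards [ae_restrict_mem₀ (nullMeasurableSet_lt (by fun_prop) aemeasurable_const)]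
      with ω hω
    exact (show |Y ω| < τ from hω).le.trans hτσ
  have hmom_le : ∫ ω in {ω | |Y ω| < τ}, |Y ω| ^ (1 + ε) ∂μ ≤ ∫ ω, |Y ω| ^ (1 + ε) ∂μ :=
    setIntegral_le_integral hmom (ae_of_all _ fun ω => by positivity)
  have hmass_le : (μ.restrict {ω | |Y ω| < τ}).real Set.univ ≤ 1 := by
    rw [measureReal_restrict_apply_univ]
    exact measureReal_le_one
  refine (integral_sq_sub_mul_sq_le hU.restrict hV.restrict hY.restrict (ae_restrict_of_ae hUM)
    (ae_restrict_of_ae hVM) hYσ hMσ hε hε1).trans ?_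
  gcongr
  exact mul_le_of_le_one_left (by positivity) hmass_le

end Integral

/-- Second moment of the squared-loss difference, weak moment case (`0 < ε ≤ 1`):
`∫_{|y| < σ/2} (f−f⋆)² (2y−f−f⋆)² dρ ≤ 48 M² (E|Y|^{1+ε} + M^{1+ε}) σ^{1−ε}`. -/
theorem second_moment_square_loss_diff_weak
    {X : Type*} [MeasurableSpace X] [MetricSpace X] [CompactSpace X] [BorelSpace X]
    (ρ : Measure (X × ℝ)) [IsProbabilityMeasure ρ]
    (ε M σ : ℝ) (hε : 0 < ε) (hε1 : ε ≤ 1) (hσ : max (2 * M) 1 < σ)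
    (hmom : Integrable (fun p : X × ℝ => |p.2| ^ (1 + ε)) ρ)
    (fstar : X → ℝ) (hfstar_meas : Measurable fstar)
    (hfstar_bdd : ∀ x, |fstar x| ≤ M)
    (hfstar_mean : ∀ᵐ x ∂ρ.fst, fstar x = ∫ y, y ∂(ρ.condKernel x))
    (f : X → ℝ) (hf_meas : Measurable f) (hf_bdd : ∀ x, |f x| ≤ M) :
    (∫ p in {p : X × ℝ | |p.2| < σ / 2},
        (f p.1 - fstar p.1) ^ 2 * (2 * p.2 - f p.1 - fstar p.1) ^ 2 ∂ρ)
      ≤ 48 * M ^ 2 * ((∫ p, |p.2| ^ (1 + ε) ∂ρ) + M ^ (1 + ε)) * σ ^ (1 - ε) := by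
  have hM : 0 ≤ M := (abs_nonneg _).trans (hf_bdd (nonempty_of_isProbabilityMeasure ρ).some.1)
  have hMσ : 2 * M < σ := (max_lt_iff.mp hσ).1
  have hσ0 : 0 ≤ σ := by linarith
  refine (second_moment_square_loss_diff_weak_general (U := fun p => f p.1)
    (V := fun p => fstar p.1) (by fun_prop) (by fun_prop) measurable_snd.aemeasurable
    (ae_of_all _ fun p => hf_bdd p.1) (ae_of_all _ fun p => hfstar_bdd p.1)
    (by linarith : M ≤ σ) (half_le_self hσ0) (by linarith) hε1 hmom).trans ?_
  gcongr
  norm_num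
end

section
/- (The Huber location minimizer is biased for an asymmetric zero-mean density.) Let p_ε : ℝ → ℝ be the probability density defined by p_ε(t) = (1/2) e^{−(t + 1/4)} for t ≥ −1/4 and p_ε(t) = e^{2(t + 1/4)} for t < −1/4, which has zero mean. Then for every σ > 0, if ν₀ ∈ ℝ minimizes ν ↦ ∫_ℝ ℓ_σ(u − ν) p_ε(u) du over ℝ, then ν₀ ≠ 0. -/
open MeasureTheory

/-- The asymmetric zero-mean density `p_ε` from the counterexample. -/
noncomputable def pEps (t : ℝ) : ℝ :=
  if -(1/4) ≤ t then (1/2) * Real.exp (-(t + 1/4)) else Real.exp (2 * (t + 1/4))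

/-!
Let `ψ` denote the identity clipped to `[-σ, σ]`. Being a Moreau envelope, the Huber loss satisfies
`ℓ_σ(t - h) ≤ ℓ_σ(t) - 2 h ψ(t) + h²`, so a minimizer `ν` of the mean loss must satisfy
`𝔼 ψ(u - ν) = 0`. For `p_ε` the value `ν = 0` fails this equation: since the mean is zero,
`𝔼 ψ(u) = 𝔼 (-σ - u)⁺ - 𝔼 (u - σ)⁺`, and both terms have closed forms because both tails of `p_ε`
are exponential (for `σ < 1/4`, where `-σ` lies to the right of the jump, the left term is first
traded for `𝔼 (u + σ)⁺ - σ`). The difference is negative for every `σ > 0`.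
-/

open Set

theorem exp_sub_exp_neg_le (x : ℝ) : Real.exp x - Real.exp (-x) ≤ 2 * x * Real.exp x := by
  have hneg : Real.exp (-x) = Real.exp x * Real.exp (-2 * x) := by
    rw [← Real.exp_add]
    ring_nf
  nlinarith [Real.add_one_le_exp (-2 * x), Real.exp_pos x]

theorem integral_max_zero_mul_of_eq_exp {f : ℝ → ℝ} {c r : ℝ} (hr : 0 < r)
    (hf : ∀ x, 0 < x → f x = c * Real.exp (-(r * x))) :
    ∫ x, max x 0 * f x = c / r ^ 2 := by
  have hgamma : ∫ x in Ioi (0 : ℝ), x * Real.exp (-(r * x)) = 1 / r ^ 2 := by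
    have h := Real.integral_rpow_mul_exp_neg_mul_Ioi two_pos hr
    simpa only [show (2 : ℝ) - 1 = 1 by norm_num, Real.rpow_one, Real.rpow_two, Real.Gamma_two,
      mul_one, one_div, inv_pow] using h
  calc ∫ x, max x 0 * f x = ∫ x in Ioi 0, max x 0 * f x := by
        refine (setIntegral_eq_integral_of_forall_compl_eq_zero fun x hx => ?_).symm
        rw [max_eq_right (by simpa using hx), zero_mul]
    _ = ∫ x in Ioi 0, c * (x * Real.exp (-(r * x))) := by
        refine setIntegral_congr_fun measurableSet_Ioi fun x (hx : 0 < x) => ?_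
        simp only [max_eq_left hx.le, hf x hx]
        ring
    _ = c / r ^ 2 := by rw [integral_const_mul, hgamma, mul_one_div]

section HuberLoss

variable {σ : ℝ}

/-- The score function of the Huber loss, i.e. half its derivative: the identity clipped to
`[-σ, σ]`. -/
noncomputable def huberScore (σ t : ℝ) : ℝ :=
  max (-σ) (min t σ)

-- The minimum over `s` of the right-hand side is the Moreau envelope of `2 * σ * |·|`.
theorem huberLoss_le_sq_sub_add (hσ : 0 ≤ σ) (t s : ℝ) :
    huberLoss σ t ≤ (t - s) ^ 2 + 2 * σ * |s| := by
  unfold huberLoss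
  split_ifs with ht
  · have hts : t * s ≤ σ * |s| :=
      (le_abs_self _).trans ((abs_mul t s).trans_le (by gcongr))
    nlinarith [sq_nonneg s]
  · have htri : |t| ≤ |t - s| + |s| := by simpa using abs_add_le (t - s) s
    nlinarith [sq_nonneg (|t - s| - σ), sq_abs (t - s)]

theorem huberLoss_eq_sq_huberScore_add (hσ : 0 ≤ σ) (t : ℝ) :
    huberLoss σ t = huberScore σ t ^ 2 + 2 * σ * |t - huberScore σ t| := by
  unfold huberLoss huberScore
  split_ifs with ht
  · obtain ⟨hl, hr⟩ := abs_le.mp ht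
    simp [min_eq_left hr, max_eq_right hl]
  · rcases lt_abs.mp (not_le.mp ht) with hr | hl
    · rw [min_eq_right hr.le, max_eq_right (by linarith), abs_of_pos (by linarith),
        abs_of_pos (by linarith)]
      ring
    · rw [min_eq_left (by linarith), max_eq_left (by linarith), abs_of_neg (by linarith),
        abs_of_neg (by linarith)]
      ring

theorem huberLoss_sub_le_s15 (hσ : 0 ≤ σ) (t h : ℝ) :
    huberLoss σ (t - h) ≤ huberLoss σ t - 2 * h * huberScore σ t + h ^ 2 := by
  have henv := huberLoss_le_sq_sub_add hσ (t - h) (t - huberScore σ t)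
  rw [huberLoss_eq_sq_huberScore_add hσ t]
  linarith

theorem huberLoss_nonneg (hσ : 0 ≤ σ) (t : ℝ) : 0 ≤ huberLoss σ t := by
  rw [huberLoss_eq_sq_huberScore_add hσ]
  positivity

theorem huberLoss_le_mul_abs (hσ : 0 ≤ σ) (t : ℝ) : huberLoss σ t ≤ 2 * σ * |t| := by
  simpa using huberLoss_le_sq_sub_add hσ t t

theorem abs_huberScore_le (hσ : 0 ≤ σ) (t : ℝ) : |huberScore σ t| ≤ σ :=
  abs_le.mpr ⟨le_max_left _ _, max_le (by linarith) (min_le_right _ _)⟩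

theorem huberScore_eq_add_max_sub_max (hσ : 0 ≤ σ) (t : ℝ) :
    huberScore σ t = t + max (-σ - t) 0 - max (t - σ) 0 := by
  unfold huberScore
  grind

theorem measurable_huberLoss (σ : ℝ) : Measurable (huberLoss σ) :=
  Measurable.ite (measurableSet_le (by fun_prop) (by fun_prop)) (by fun_prop) (by fun_prop)

theorem measurable_huberScore (σ : ℝ) : Measurable (huberScore σ) := by
  unfold huberScore
  fun_prop

end HuberLoss

section MeanHuberLoss

variable {μ : Measure ℝ} [IsFiniteMeasure μ] {σ : ℝ}

theorem integrable_huberLoss_sub (hσ : 0 ≤ σ) (hμ : Integrable (fun u => u) μ) (ν : ℝ) :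
    Integrable (fun u => huberLoss σ (u - ν)) μ := by
  refine ((hμ.sub (integrable_const ν)).abs.const_mul (2 * σ)).mono'
    ((measurable_huberLoss σ).comp (by fun_prop)).aestronglyMeasurable (.of_forall fun u => ?_)
  rw [Real.norm_of_nonneg (huberLoss_nonneg hσ _)]
  exact huberLoss_le_mul_abs hσ _

theorem integrable_huberScore_sub (hσ : 0 ≤ σ) (ν : ℝ) :
    Integrable (fun u => huberScore σ (u - ν)) μ :=
  .of_bound ((measurable_huberScore σ).comp (by fun_prop)).aestronglyMeasurable σ
    (.of_forall fun _ => abs_huberScore_le hσ _)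

theorem integral_huberLoss_sub_add_le (hσ : 0 ≤ σ) (hμ : Integrable (fun u => u) μ) (ν h : ℝ) :
    ∫ u, huberLoss σ (u - (ν + h)) ∂μ ≤
      ∫ u, huberLoss σ (u - ν) ∂μ - 2 * h * ∫ u, huberScore σ (u - ν) ∂μ
        + h ^ 2 * μ.real univ := by
  have hloss := integrable_huberLoss_sub hσ hμ
  have hscore := (integrable_huberScore_sub (μ := μ) hσ ν).const_mul (2 * h)
  calc ∫ u, huberLoss σ (u - (ν + h)) ∂μ
      ≤ ∫ u, (huberLoss σ (u - ν) - 2 * h * huberScore σ (u - ν) + h ^ 2) ∂μ := by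
        refine integral_mono (hloss _) (((hloss ν).sub' hscore).add (integrable_const _))
          fun u => ?_
        simpa only [sub_sub] using huberLoss_sub_le_s15 hσ (u - ν) h
    _ = _ := by
        rw [integral_add ((hloss ν).sub' hscore) (integrable_const _),
          integral_sub (hloss ν) hscore, integral_const_mul, integral_const, smul_eq_mul,
          mul_comm (μ.real univ)]

theorem integral_huberScore_sub_eq_zero_of_minimizer (hσ : 0 ≤ σ)
    (hμ : Integrable (fun u => u) μ) {ν : ℝ}
    (hmin : ∀ ν', ∫ u, huberLoss σ (u - ν) ∂μ ≤ ∫ u, huberLoss σ (u - ν') ∂μ) :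
    ∫ u, huberScore σ (u - ν) ∂μ = 0 := by
  set m := ∫ u, huberScore σ (u - ν) ∂μ
  have hM : 0 ≤ μ.real univ := measureReal_nonneg
  -- Any small positive multiple of `m` would do for the step `h`.
  obtain ⟨h, hm⟩ : ∃ h, m = h * (μ.real univ + 1) := ⟨m / (μ.real univ + 1), by field_simp⟩
  have hquad : 2 * h * m ≤ h ^ 2 * μ.real univ := by
    linarith [hmin (ν + h), integral_huberLoss_sub_add_le hσ hμ ν h]
  have hh : h = 0 := by
    rw [hm] at hquad
    exact (sq_nonpos_iff h).mp (by nlinarith)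
  rw [hm, hh, zero_mul]

theorem integral_huberScore (hσ : 0 ≤ σ) (hμ : Integrable (fun u => u) μ) :
    ∫ u, huberScore σ u ∂μ =
      ∫ u, u ∂μ + ∫ u, max (-σ - u) 0 ∂μ - ∫ u, max (u - σ) 0 ∂μ := by
  have hleft : Integrable (fun u => max (-σ - u) 0) μ := ((integrable_const _).sub hμ).pos_part
  have hright : Integrable (fun u => max (u - σ) 0) μ := (hμ.sub (integrable_const _)).pos_part
  simp_rw [huberScore_eq_add_max_sub_max hσ]
  rw [integral_sub (hμ.fun_add hleft) hright, integral_add hμ hleft]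

theorem integral_max_rsub_eq_integral_max_sub (hμ : Integrable (fun u => u) μ) (a : ℝ) :
    ∫ u, max (a - u) 0 ∂μ = ∫ u, max (u - a) 0 ∂μ - ∫ u, u ∂μ + a * μ.real univ := by
  have hright : Integrable (fun u => max (u - a) 0) μ := (hμ.sub (integrable_const a)).pos_part
  have hparity (u : ℝ) : max (a - u) 0 = max (u - a) 0 - u + a := by grind
  simp_rw [hparity]
  rw [integral_add (hright.sub' hμ) (integrable_const a), integral_sub hright hμ, integral_const,
    smul_eq_mul, mul_comm a]

end MeanHuberLoss

theorem measurable_pEps : Measurable pEps :=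
  Measurable.ite measurableSet_Ici (by fun_prop) (by fun_prop)

theorem pEps_nonneg (t : ℝ) : 0 ≤ pEps t := by
  unfold pEps
  split_ifs <;> positivity

theorem pEps_add_of_pos {a x : ℝ} (ha : -(1 / 4) ≤ a) (hx : 0 < x) :
    pEps (x + a) = 1 / 2 * Real.exp (-(a + 1 / 4)) * Real.exp (-(1 * x)) := by
  rw [pEps, if_pos (by linarith), mul_assoc, ← Real.exp_add]
  ring_nf

theorem pEps_sub_of_pos {a x : ℝ} (ha : a ≤ -(1 / 4)) (hx : 0 < x) :
    pEps (a - x) = Real.exp (2 * (a + 1 / 4)) * Real.exp (-(2 * x)) := by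
  rw [pEps, if_neg (by linarith), ← Real.exp_add]
  ring_nf

theorem setIntegral_Ioi_pEps : ∫ t in Ioi (-(1 / 4)), pEps t = 1 / 2 := by
  calc ∫ t in Ioi (-(1 / 4)), pEps t
      = ∫ t in Ioi (-(1 / 4)), 1 / 2 * Real.exp (-(1 / 4)) * Real.exp (-t) := by
        refine setIntegral_congr_fun measurableSet_Ioi fun t (ht : -(1 / 4) < t) => ?_
        simp only [pEps, if_pos ht.le, mul_assoc, ← Real.exp_add]
        ring_nf
    _ = 1 / 2 := by
        rw [integral_const_mul, integral_exp_neg_Ioi, mul_assoc, ← Real.exp_add]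
        simp

theorem setIntegral_Iic_pEps : ∫ t in Iic (-(1 / 4)), pEps t = 1 / 2 := by
  calc ∫ t in Iic (-(1 / 4)), pEps t = ∫ t in Iio (-(1 / 4)), pEps t :=
        integral_Iic_eq_integral_Iio
    _ = ∫ t in Iio (-(1 / 4)), Real.exp (1 / 2) * Real.exp (2 * t) := by
        refine setIntegral_congr_fun measurableSet_Iio fun t (ht : t < -(1 / 4)) => ?_
        simp only [pEps, if_neg ht.not_ge, ← Real.exp_add]
        ring_nf
    _ = 1 / 2 := by
        rw [← integral_Iic_eq_integral_Iio, integral_const_mul, integral_exp_mul_Iic two_pos,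
          mul_div_assoc', ← Real.exp_add]
        norm_num

theorem integral_pEps : ∫ t, pEps t = 1 := by
  have hIic : IntegrableOn pEps (Iic (-(1 / 4))) :=
    .of_integral_ne_zero (by rw [setIntegral_Iic_pEps]; norm_num)
  have hIoi : IntegrableOn pEps (Ioi (-(1 / 4))) :=
    .of_integral_ne_zero (by rw [setIntegral_Ioi_pEps]; norm_num)
  rw [← intervalIntegral.integral_Iic_add_Ioi hIic hIoi, setIntegral_Iic_pEps,
    setIntegral_Ioi_pEps, add_halves]

/-- The probability distribution on `ℝ` whose density with respect to Lebesgue measure is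
`pEps`. -/
noncomputable def pEpsMeasure : Measure ℝ :=
  volume.withDensity fun t => ENNReal.ofReal (pEps t)

theorem integral_pEpsMeasure (f : ℝ → ℝ) : ∫ u, f u ∂pEpsMeasure = ∫ u, f u * pEps u := by
  rw [pEpsMeasure, integral_withDensity_eq_integral_toReal_smul measurable_pEps.ennreal_ofReal
    (.of_forall fun _ => ENNReal.ofReal_lt_top)]
  simp only [ENNReal.toReal_ofReal (pEps_nonneg _), smul_eq_mul, mul_comm]

instance : IsProbabilityMeasure pEpsMeasure where
  measure_univ := by
    rw [pEpsMeasure, withDensity_apply _ .univ, setLIntegral_univ,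
      ← ofReal_integral_eq_lintegral_ofReal (integrable_of_integral_eq_one integral_pEps)
        (.of_forall pEps_nonneg), integral_pEps, ENNReal.ofReal_one]

theorem integral_max_sub_pEpsMeasure {a : ℝ} (ha : -(1 / 4) ≤ a) :
    ∫ u, max (u - a) 0 ∂pEpsMeasure = 1 / 2 * Real.exp (-(a + 1 / 4)) := by
  rw [integral_pEpsMeasure, ← integral_add_right_eq_self _ a]
  simp only [add_sub_cancel_right]
  rw [integral_max_zero_mul_of_eq_exp one_pos fun x hx => pEps_add_of_pos ha hx, one_pow, div_one]

theorem integral_max_rsub_pEpsMeasure {a : ℝ} (ha : a ≤ -(1 / 4)) :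
    ∫ u, max (a - u) 0 ∂pEpsMeasure = 1 / 4 * Real.exp (2 * (a + 1 / 4)) := by
  rw [integral_pEpsMeasure, ← integral_sub_left_eq_self _ _ a]
  simp only [sub_sub_cancel]
  rw [integral_max_zero_mul_of_eq_exp two_pos fun x hx => pEps_sub_of_pos ha hx]
  ring

theorem integrable_id_pEpsMeasure : Integrable (fun u => u) pEpsMeasure := by
  have hright : Integrable (fun u => max (u - -(1 / 4)) 0) pEpsMeasure :=
    .of_integral_ne_zero (by rw [integral_max_sub_pEpsMeasure le_rfl]; positivity)
  have hleft : Integrable (fun u => max (-(1 / 4) - u) 0) pEpsMeasure :=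
    .of_integral_ne_zero (by rw [integral_max_rsub_pEpsMeasure le_rfl]; positivity)
  refine ((hright.sub hleft).sub (integrable_const (1 / 4))).congr (.of_forall fun u => ?_)
  simp only [Pi.sub_apply]
  grind

theorem integral_id_pEpsMeasure : ∫ u, u ∂pEpsMeasure = 0 := by
  have hparity := integral_max_rsub_eq_integral_max_sub integrable_id_pEpsMeasure (-(1 / 4))
  rw [integral_max_rsub_pEpsMeasure le_rfl, integral_max_sub_pEpsMeasure le_rfl,
    probReal_univ, neg_add_cancel, mul_zero, neg_zero, Real.exp_zero] at hparity
  linarith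

theorem integral_huberScore_pEpsMeasure_of_le {σ : ℝ} (h₀ : 0 ≤ σ) (hσ : σ ≤ 1 / 4) :
    ∫ u, huberScore σ u ∂pEpsMeasure =
      1 / 2 * (Real.exp (σ - 1 / 4) - Real.exp (-σ - 1 / 4)) - σ := by
  rw [integral_huberScore h₀ integrable_id_pEpsMeasure,
    integral_max_rsub_eq_integral_max_sub integrable_id_pEpsMeasure,
    integral_max_sub_pEpsMeasure (by linarith), integral_max_sub_pEpsMeasure (by linarith),
    integral_id_pEpsMeasure, probReal_univ]
  ring_nf

theorem integral_huberScore_pEpsMeasure_of_ge {σ : ℝ} (hσ : 1 / 4 ≤ σ) :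
    ∫ u, huberScore σ u ∂pEpsMeasure =
      1 / 4 * Real.exp (1 / 2 - 2 * σ) - 1 / 2 * Real.exp (-σ - 1 / 4) := by
  rw [integral_huberScore (by linarith) integrable_id_pEpsMeasure,
    integral_max_rsub_pEpsMeasure (by linarith), integral_max_sub_pEpsMeasure (by linarith),
    integral_id_pEpsMeasure]
  ring_nf

theorem integral_huberScore_pEpsMeasure_neg {σ : ℝ} (hσ : 0 < σ) :
    ∫ u, huberScore σ u ∂pEpsMeasure < 0 := by
  rcases lt_or_ge σ (1 / 4) with h | h
  · have hlt : Real.exp (σ - 1 / 4) < 1 := Real.exp_lt_one_iff.mpr (by linarith)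
    have hsub : Real.exp (σ - 1 / 4) - Real.exp (-σ - 1 / 4) ≤ 2 * σ * Real.exp (σ - 1 / 4) := by
      have := mul_le_mul_of_nonneg_right (exp_sub_exp_neg_le σ) (Real.exp_pos (-(1 / 4))).le
      simpa only [sub_mul, mul_assoc, ← Real.exp_add, ← sub_eq_add_neg] using this
    rw [integral_huberScore_pEpsMeasure_of_le hσ.le h.le]
    nlinarith
  · have hlt : Real.exp (3 / 4 - σ) < 2 := by
      rw [← Real.lt_log_iff_exp_lt two_pos]
      linarith [Real.log_two_gt_d9]
    have hexp : Real.exp (1 / 2 - 2 * σ) = Real.exp (3 / 4 - σ) * Real.exp (-σ - 1 / 4) := by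
      rw [← Real.exp_add]
      ring_nf
    rw [integral_huberScore_pEpsMeasure_of_ge h, hexp]
    nlinarith [Real.exp_pos (-σ - 1 / 4)]

/-- The Huber location minimizer is biased for the asymmetric zero-mean density
`p_ε`: for every `σ > 0`, any minimizer `ν₀` of `ν ↦ ∫ ℓ_σ(u − ν) p_ε(u) du` is nonzero. -/
theorem huber_location_minimizer_ne_zero (σ : ℝ) (hσ : 0 < σ) (ν₀ : ℝ)
    (hmin : ∀ ν : ℝ, (∫ u, huberLoss σ (u - ν₀) * pEps u) ≤ ∫ u, huberLoss σ (u - ν) * pEps u) :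
    ν₀ ≠ 0 := by
  rintro rfl
  have hfoc : ∫ u, huberScore σ (u - 0) ∂pEpsMeasure = 0 :=
    integral_huberScore_sub_eq_zero_of_minimizer hσ.le integrable_id_pEpsMeasure
      (by simpa only [integral_pEpsMeasure] using hmin)
  simp only [sub_zero] at hfoc
  exact (integral_huberScore_pEpsMeasure_neg hσ).ne hfoc
end
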